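/- Let G be a graph on n vertices with distinguished vertices s and t, and for each s–t path P in G let 𝟙_P ∈ ℝ^E be the characteristic vector of its edge set (E the edge set of G). Let f* ∈ ℝ^E lie in the convex hull of {𝟙_P : P an s–t path in G} (i.e. f* is an s–t flow routing one unit of demand). Then for every real p ≥ 2 and ε > 0, there exist a positive integer k ≤ ⌈4(p−1)·n^{2/p}/ε²⌉ and s–t paths P₁, …, P_k (repetitions allowed) such that ‖(1/k)·Σ_{t=1}^{k} 𝟙_{P_t} − f*‖_p ≤ ε; equivalently, there is a probability distribution over s–t paths supported on at most ⌈4(p−1)·n^{2/p}/ε²⌉ paths whose expected indicator vector is within ε of f* in ℓ_p norm. -/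

import Mathlib

open Finset
open scoped Classical

/-- The ℓ_p norm of a finite-dimensional real vector, for real `p ≥ 1`. -/
noncomputable def lpNorm {ι : Type*} [Fintype ι] (p : ℝ) (x : ι → ℝ) : ℝ :=
  (∑ j, |x j| ^ p) ^ (1 / p)

/-! For `p ≥ 2` the function `‖·‖_p²` lies below its tangent plane at `x` plus `(p - 1) ‖y‖_p²`,
where `y` is the displacement from `x`: along a line that avoids the origin its second derivative
is at most `2 (p - 1) ‖y‖_p²` by Hölder's inequality, and on a line through the origin it is a
quadratic polynomial.

Given this smoothness, the vectors `w₁, …, w_k` are chosen greedily. A linear functional takes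
a value at most `ℓ f` at some generator of a convex hull containing `f`, so the next `wᵢ` can be
chosen to make the first-order term at `∑ (wⱼ - f)` nonpositive, and each choice increases
`‖∑ (wⱼ - f)‖_p²` by at most `(p - 1) (2R)²`, where `R = n^{1/p}` bounds the norms of the path
indicators. Dividing by `k²` gives the squared error `4 (p - 1) n^{2/p} / k`.
-/

section TwoSmooth

variable {E : Type*} [AddCommGroup E] [Module ℝ E] {N : Seminorm ℝ E} {K : ℝ}

/-- A seminorm is 2-smooth with constant `K` if its square is bounded above, at every base point
`x`, by an affine function plus `K` times the squared seminorm of the increment. This is the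
one-sided form of 2-uniform smoothness; the functional `ℓ` plays the role of the gradient. -/
def IsTwoSmooth (N : Seminorm ℝ E) (K : ℝ) : Prop :=
  ∀ x, ∃ ℓ : Module.Dual ℝ E, ∀ y, N (x + y) ^ 2 ≤ N x ^ 2 + ℓ y + K * N y ^ 2

theorem exists_dual_le_of_mem_convexHull {S : Set E} {f : E} (hf : f ∈ convexHull ℝ S)
    (ℓ : Module.Dual ℝ E) : ∃ v ∈ S, ℓ v ≤ ℓ f :=
  (ℓ.concaveOn convex_univ).exists_le_of_mem_convexHull (Set.subset_univ S) hf

theorem seminorm_le_of_mem_convexHull {S : Set E} {f : E} {R : ℝ} (hf : f ∈ convexHull ℝ S)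
    (hR : ∀ v ∈ S, N v ≤ R) : N f ≤ R :=
  have ⟨v, hv, hfv⟩ := N.convexOn.exists_ge_of_mem_convexHull (Set.subset_univ S) hf
  hfv.trans (hR v hv)

namespace IsTwoSmooth

theorem exists_sum_sub_sq_le (hN : IsTwoSmooth N K) (hK : 0 ≤ K) {S : Set E} {f : E} {D : ℝ}
    (hf : f ∈ convexHull ℝ S) (hD : ∀ v ∈ S, N (v - f) ≤ D) (k : ℕ) :
    ∃ w : Fin k → E, (∀ i, w i ∈ S) ∧ N (∑ i, (w i - f)) ^ 2 ≤ k * (K * D ^ 2) := by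
  induction k with
  | zero => exact ⟨Fin.elim0, fun i => i.elim0, by simp⟩
  | succ k ih =>
    obtain ⟨w, hwS, hw⟩ := ih
    obtain ⟨ℓ, hℓ⟩ := hN (∑ i, (w i - f))
    obtain ⟨v, hvS, hv⟩ := exists_dual_le_of_mem_convexHull hf ℓ
    refine ⟨Fin.snoc w v, fun i => ?_, ?_⟩
    · cases i using Fin.lastCases with
      | last => simpa only [Fin.snoc_last] using hvS
      | cast i => simpa only [Fin.snoc_castSucc] using hwS i
    · have hdescent : ℓ (v - f) ≤ 0 := by rw [map_sub]; exact sub_nonpos.mpr hv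
      have hstep : K * N (v - f) ^ 2 ≤ K * D ^ 2 := by gcongr; exact hD v hvS
      simp only [Fin.sum_univ_castSucc, Fin.snoc_castSucc, Fin.snoc_last]
      push_cast
      linarith [hℓ (v - f)]

theorem exists_average_sub_sq_le (hN : IsTwoSmooth N K) (hK : 0 ≤ K) {S : Set E} {f : E} {R : ℝ}
    (hf : f ∈ convexHull ℝ S) (hR : ∀ v ∈ S, N v ≤ R) {k : ℕ} (hk : 0 < k) :
    ∃ w : Fin k → E, (∀ i, w i ∈ S) ∧
      N ((1 / (k : ℝ)) • ∑ i, w i - f) ^ 2 ≤ 4 * K * R ^ 2 / k := by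
  have hD : ∀ v ∈ S, N (v - f) ≤ 2 * R := fun v hv => by
    linarith [map_sub_le_add N v f, hR v hv, seminorm_le_of_mem_convexHull hf hR]
  obtain ⟨w, hwS, hw⟩ := hN.exists_sum_sub_sq_le hK hf hD k
  refine ⟨w, hwS, ?_⟩
  have hk' : (0 : ℝ) < k := Nat.cast_pos.mpr hk
  have hcentered : (1 / (k : ℝ)) • ∑ i, w i - f = (1 / (k : ℝ)) • ∑ i, (w i - f) := by
    rw [sum_sub_distrib, sum_const, card_univ, Fintype.card_fin, smul_sub,
      ← Nat.cast_smul_eq_nsmul ℝ, smul_smul, one_div_mul_cancel hk'.ne', one_smul]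
  calc N ((1 / (k : ℝ)) • ∑ i, w i - f) ^ 2
      = (1 / (k : ℝ)) ^ 2 * N (∑ i, (w i - f)) ^ 2 := by
        rw [hcentered, map_smul_eq_mul, Real.norm_of_nonneg (by positivity), mul_pow]
    _ ≤ (1 / (k : ℝ)) ^ 2 * (k * (K * (2 * R) ^ 2)) := by gcongr
    _ = 4 * K * R ^ 2 / k := by field_simp; ring

theorem approximate_caratheodory (hN : IsTwoSmooth N K) (hK : 0 ≤ K) {S : Set E} {f : E} {R ε : ℝ}
    (hf : f ∈ convexHull ℝ S) (hR : ∀ v ∈ S, N v ≤ R) (hε : 0 < ε) {k : ℕ} (hk : 0 < k)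
    (hkε : 4 * K * R ^ 2 / ε ^ 2 ≤ k) :
    ∃ w : Fin k → E, (∀ i, w i ∈ S) ∧ N ((1 / (k : ℝ)) • ∑ i, w i - f) ≤ ε := by
  obtain ⟨w, hwS, hw⟩ := hN.exists_average_sub_sq_le hK hf hR hk
  refine ⟨w, hwS, le_of_sq_le_sq (hw.trans ?_) hε.le⟩
  rw [div_le_iff₀ (by positivity)] at hkε ⊢
  linarith

end IsTwoSmooth

end TwoSmooth

section Calculus

theorem hasDerivAt_abs_rpow_mul_self {q : ℝ} (hq : 0 ≤ q) (z : ℝ) :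
    HasDerivAt (fun z : ℝ => |z| ^ q * z) ((q + 1) * |z| ^ q) z := by
  rcases eq_or_ne z 0 with rfl | hz
  · have hderiv : (q + 1) * |(0 : ℝ)| ^ q = |0| ^ q := by
      rcases hq.eq_or_lt with rfl | hq
      · simp
      · simp [Real.zero_rpow hq.ne']
    have hcont : Continuous fun w : ℝ => |w| ^ q :=
      continuous_abs.rpow_const fun _ => Or.inr hq
    rw [hderiv, hasDerivAt_iff_tendsto_slope]
    refine ((hcont.tendsto 0).mono_left nhdsWithin_le_nhds).congr' ?_
    filter_upwards [self_mem_nhdsWithin] with w hw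
    rw [slope_def_field, mul_zero, sub_zero, sub_zero, mul_div_cancel_right₀ _ hw]
  · have habs : |z| ≠ 0 := abs_ne_zero.mpr hz
    refine (((hasDerivAt_abs hz).rpow_const (p := q) (Or.inl habs)).mul
      (hasDerivAt_id z)).congr_deriv ?_
    have hsign : (SignType.sign z : ℝ) * z = |z| := by simp
    have hpow : |z| ^ (q - 1) * |z| = |z| ^ q := by
      rw [Real.rpow_sub_one habs, div_mul_cancel₀ _ habs]
    rw [id]
    linear_combination q * |z| ^ (q - 1) * hsign + q * hpow

theorem le_quadratic_of_hasDerivAt2_le {φ φ' φ'' : ℝ → ℝ} {M : ℝ}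
    (hφ : ∀ t, HasDerivAt φ (φ' t) t) (hφ' : ∀ t, HasDerivAt φ' (φ'' t) t)
    (hM : ∀ t, φ'' t ≤ M) {a b : ℝ} (hab : a < b) :
    φ b ≤ φ a + φ' a * (b - a) + M / 2 * (b - a) ^ 2 := by
  have hψ : ∀ t, HasDerivAt (fun t => M / 2 * (t - a) ^ 2 - φ t) (M * (t - a) - φ' t) t := fun t =>
    (((((hasDerivAt_id t).sub_const a).pow 2).const_mul (M / 2)).sub (hφ t)).congr_deriv
      (by simp; ring)
  have hψ' : ∀ t, HasDerivAt (fun t => M * (t - a) - φ' t) (M - φ'' t) t := fun t =>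
    ((((hasDerivAt_id t).sub_const a).const_mul M).sub (hφ' t)).congr_deriv (by simp)
  have hconvex : ConvexOn ℝ Set.univ fun t => M / 2 * (t - a) ^ 2 - φ t :=
    convexOn_of_hasDerivWithinAt2_nonneg convex_univ
      (fun t _ => (hψ t).continuousAt.continuousWithinAt) (fun t _ => (hψ t).hasDerivWithinAt)
      (fun t _ => (hψ' t).hasDerivWithinAt) (fun t _ => sub_nonneg.mpr (hM t))
  have hslope := hconvex.le_slope_of_hasDerivAt (Set.mem_univ a) (Set.mem_univ b) hab (hψ a)
  rw [slope_def_field, le_div_iff₀ (sub_pos.mpr hab)] at hslope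
  linarith

end Calculus

section LpNorm

variable {ι : Type*} [Fintype ι] {p : ℝ}

theorem lpNorm_nonneg (p : ℝ) (x : ι → ℝ) : 0 ≤ lpNorm p x := by
  unfold lpNorm; positivity

theorem lpNorm_rpow (hp : p ≠ 0) (x : ι → ℝ) : lpNorm p x ^ p = ∑ j, |x j| ^ p := by
  rw [lpNorm, ← Real.rpow_mul (by positivity), one_div_mul_cancel hp, Real.rpow_one]

theorem lpNorm_smul (hp : p ≠ 0) (a : ℝ) (x : ι → ℝ) : lpNorm p (a • x) = |a| * lpNorm p x := by
  simp only [lpNorm, Pi.smul_apply, smul_eq_mul, abs_mul,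
    Real.mul_rpow (abs_nonneg a) (abs_nonneg _), ← mul_sum]
  rw [Real.mul_rpow (by positivity) (by positivity), ← Real.rpow_mul (abs_nonneg a),
    mul_one_div_cancel hp, Real.rpow_one]

theorem lpNorm_add_le (hp : 1 ≤ p) (x y : ι → ℝ) : lpNorm p (x + y) ≤ lpNorm p x + lpNorm p y :=
  Real.Lp_add_le univ x y hp

theorem lpNorm_pos (p : ℝ) {x : ι → ℝ} (hx : x ≠ 0) : 0 < lpNorm p x := by
  obtain ⟨j, hj⟩ := Function.ne_iff.mp hx
  have hj' : 0 < |x j| ^ p := Real.rpow_pos_of_pos (abs_pos.mpr hj) p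
  exact Real.rpow_pos_of_pos (hj'.trans_le (single_le_sum (f := fun j => |x j| ^ p)
    (fun _ _ => by positivity) (mem_univ j))) _

/-- The norm `lpNorm p` as a seminorm, giving access to Mathlib's results on convexity. -/
noncomputable def lpSeminorm (ι : Type*) [Fintype ι] (hp : 1 ≤ p) : Seminorm ℝ (ι → ℝ) :=
  Seminorm.of (lpNorm p) (lpNorm_add_le hp) (lpNorm_smul (by linarith))

@[simp]
theorem lpSeminorm_apply (hp : 1 ≤ p) (x : ι → ℝ) : lpSeminorm ι hp x = lpNorm p x :=
  rfl

theorem sum_abs_rpow_mul_abs_rpow_le {q r : ℝ} (hq : 0 ≤ q) (hr : 0 < r) (x y : ι → ℝ) :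
    ∑ j, |x j| ^ q * |y j| ^ r ≤ lpNorm (q + r) x ^ q * lpNorm (q + r) y ^ r := by
  rcases hq.eq_or_lt with rfl | hq
  · simp [lpNorm_rpow hr.ne']
  have hconj : ((q + r) / q).HolderConjugate ((q + r) / r) := by
    rw [Real.holderConjugate_iff, inv_div, inv_div, ← add_div, one_lt_div hq]
    exact ⟨by linarith, div_self (by positivity)⟩
  have hnorm : ∀ {s : ℝ}, 0 < s → ∀ z : ι → ℝ,
      (∑ j, |(|z j| ^ s)| ^ ((q + r) / s)) ^ (1 / ((q + r) / s)) = lpNorm (q + r) z ^ s := by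
    intro s hs z
    have hterm : ∀ j, |(|z j| ^ s)| ^ ((q + r) / s) = |z j| ^ (q + r) := fun j => by
      rw [abs_of_nonneg (by positivity), ← Real.rpow_mul (abs_nonneg _), mul_div_cancel₀ _ hs.ne']
    simp only [hterm]
    rw [lpNorm, ← Real.rpow_mul (by positivity), one_div_div, one_div_mul_eq_div]
  calc ∑ j, |x j| ^ q * |y j| ^ r
      ≤ (∑ j, |(|x j| ^ q)| ^ ((q + r) / q)) ^ (1 / ((q + r) / q)) *
          (∑ j, |(|y j| ^ r)| ^ ((q + r) / r)) ^ (1 / ((q + r) / r)) :=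
        Real.inner_le_Lp_mul_Lq univ _ _ hconj
    _ = lpNorm (q + r) x ^ q * lpNorm (q + r) y ^ r := by rw [hnorm hq, hnorm hr]

/-- The duality map of `ℓ_p`, with values in the algebraic dual: `lpDuality p x` is the functional
with coordinates `|x_j|^{p-2} x_j`, which is the derivative of `p⁻¹ ‖·‖_p^p` at `x`. -/
noncomputable def lpDuality (p : ℝ) (x : ι → ℝ) : Module.Dual ℝ (ι → ℝ) :=
  ∑ j, (|x j| ^ (p - 2) * x j) • LinearMap.proj j

theorem lpDuality_apply (p : ℝ) (x y : ι → ℝ) :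
    lpDuality p x y = ∑ j, |x j| ^ (p - 2) * x j * y j := by
  simp [lpDuality]

theorem lpDuality_apply_self (hp : p ≠ 0) (x : ι → ℝ) : lpDuality p x x = lpNorm p x ^ p := by
  rw [lpDuality_apply, lpNorm_rpow hp]
  refine sum_congr rfl fun j _ => ?_
  rcases eq_or_ne (x j) 0 with hj | hj
  · simp [hj, Real.zero_rpow hp]
  · rw [mul_assoc, ← abs_mul_abs_self, ← sq, ← Real.rpow_natCast,
      ← Real.rpow_add (abs_pos.mpr hj), Nat.cast_ofNat, sub_add_cancel]

theorem hasDerivAt_add_mul (a b t : ℝ) : HasDerivAt (fun t => a + t * b) b t := by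
  simpa using ((hasDerivAt_id t).mul_const b).const_add a

theorem hasDerivAt_lpNorm_line (hp : 1 < p) {x y : ι → ℝ} {t : ℝ} (hxy : x + t • y ≠ 0) :
    HasDerivAt (fun t => lpNorm p (x + t • y))
      (lpNorm p (x + t • y) ^ (1 - p) * lpDuality p (x + t • y) y) t := by
  have hp0 : p ≠ 0 := by linarith
  have hsum : HasDerivAt (fun t => ∑ j, |(x + t • y) j| ^ p) (p * lpDuality p (x + t • y) y) t := by
    rw [lpDuality_apply, mul_sum]
    refine HasDerivAt.fun_sum fun j _ => ?_
    exact ((hasDerivAt_abs_rpow _ hp).comp t (hasDerivAt_add_mul (x j) (y j) t)).congr_deriv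
      (by simp only [Pi.add_apply, Pi.smul_apply, smul_eq_mul]; ring)
  have hpos : 0 < ∑ j, |(x + t • y) j| ^ p := by
    rw [← lpNorm_rpow hp0]; exact Real.rpow_pos_of_pos (lpNorm_pos p hxy) p
  have hexp : (∑ j, |(x + t • y) j| ^ p) ^ (1 / p - 1) = lpNorm p (x + t • y) ^ (1 - p) := by
    rw [lpNorm, ← Real.rpow_mul hpos.le]
    congr 1
    field_simp
  refine (hsum.rpow_const (p := 1 / p) (Or.inl hpos.ne')).congr_deriv ?_
  rw [hexp]
  field_simp

theorem hasDerivAt_lpNorm_sq_line (hp : 1 < p) {x y : ι → ℝ} {t : ℝ} (hxy : x + t • y ≠ 0) :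
    HasDerivAt (fun t => lpNorm p (x + t • y) ^ 2)
      (2 * (lpNorm p (x + t • y) ^ (2 - p) * lpDuality p (x + t • y) y)) t := by
  refine ((hasDerivAt_lpNorm_line hp hxy).pow 2).congr_deriv ?_
  rw [show 2 - p = 1 + (1 - p) by ring, Real.rpow_add (lpNorm_pos p hxy), Real.rpow_one]
  push_cast
  ring

theorem hasDerivAt_lpDuality_line (hp : 2 ≤ p) (x y : ι → ℝ) (t : ℝ) :
    HasDerivAt (fun t => lpDuality p (x + t • y) y)
      ((p - 1) * ∑ j, |(x + t • y) j| ^ (p - 2) * y j ^ 2) t := by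
  simp only [lpDuality_apply, mul_sum]
  refine HasDerivAt.fun_sum fun j _ => ?_
  exact (((hasDerivAt_abs_rpow_mul_self (sub_nonneg.mpr hp) _).comp t
    (hasDerivAt_add_mul (x j) (y j) t)).mul_const (y j)).congr_deriv
      (by simp only [Pi.add_apply, Pi.smul_apply, smul_eq_mul]; ring)

theorem sum_abs_rpow_mul_sq_le (hp : 2 ≤ p) (x y : ι → ℝ) :
    ∑ j, |x j| ^ (p - 2) * y j ^ 2 ≤ lpNorm p x ^ (p - 2) * lpNorm p y ^ 2 := by
  simpa using sum_abs_rpow_mul_abs_rpow_le (sub_nonneg.mpr hp) two_pos x y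

theorem exists_deriv2_lpNorm_sq_line_le (hp : 2 ≤ p) {x y : ι → ℝ} {t : ℝ} (hxy : x + t • y ≠ 0) :
    ∃ d ≤ 2 * ((p - 1) * lpNorm p y ^ 2), HasDerivAt
      (fun t => 2 * (lpNorm p (x + t • y) ^ (2 - p) * lpDuality p (x + t • y) y)) d t := by
  have hN : 0 < lpNorm p (x + t • y) := lpNorm_pos p hxy
  refine ⟨_, ?_, (((hasDerivAt_lpNorm_line (by linarith) hxy).rpow_const (p := 2 - p)
    (Or.inl hN.ne')).mul (hasDerivAt_lpDuality_line hp x y t)).const_mul 2⟩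
  set z := x + t • y
  have hfirst : lpNorm p z ^ (1 - p) * lpDuality p z y * (2 - p) * lpNorm p z ^ (2 - p - 1) *
      lpDuality p z y ≤ 0 := by
    have hsq : 0 ≤ lpNorm p z ^ (1 - p) * lpNorm p z ^ (2 - p - 1) * lpDuality p z y ^ 2 := by
      positivity
    linarith [mul_nonneg (sub_nonneg.mpr hp) hsq]
  have hcancel : lpNorm p z ^ (2 - p) * lpNorm p z ^ (p - 2) = 1 := by
    rw [← Real.rpow_add hN, sub_add_sub_cancel, sub_self, Real.rpow_zero]
  have hsecond : lpNorm p z ^ (2 - p) * ((p - 1) * ∑ j, |z j| ^ (p - 2) * y j ^ 2) ≤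
      (p - 1) * lpNorm p y ^ 2 := by
    calc lpNorm p z ^ (2 - p) * ((p - 1) * ∑ j, |z j| ^ (p - 2) * y j ^ 2)
        ≤ lpNorm p z ^ (2 - p) * ((p - 1) * (lpNorm p z ^ (p - 2) * lpNorm p y ^ 2)) := by
          have hp1 : 0 ≤ p - 1 := by linarith
          gcongr
          exact sum_abs_rpow_mul_sq_le hp z y
      _ = (p - 1) * lpNorm p y ^ 2 := by linear_combination (p - 1) * lpNorm p y ^ 2 * hcancel
  linarith

theorem lpNorm_add_sq_le_of_forall_ne_zero (hp : 2 ≤ p) {x y : ι → ℝ}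
    (hxy : ∀ t : ℝ, x + t • y ≠ 0) :
    lpNorm p (x + y) ^ 2 ≤
      lpNorm p x ^ 2 + 2 * (lpNorm p x ^ (2 - p) * lpDuality p x y) + (p - 1) * lpNorm p y ^ 2 := by
  choose d hd hderiv using fun t => exists_deriv2_lpNorm_sq_line_le hp (hxy t)
  have htaylor := le_quadratic_of_hasDerivAt2_le
    (fun t => hasDerivAt_lpNorm_sq_line (by linarith) (hxy t)) hderiv hd zero_lt_one
  simp only [one_smul, zero_smul, add_zero] at htaylor
  linarith

theorem lpNorm_add_smul_self_sq (hp : p ≠ 0) (x : ι → ℝ) (a : ℝ) :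
    lpNorm p (x + a • x) ^ 2 =
      lpNorm p x ^ 2 + 2 * (lpNorm p x ^ (2 - p) * lpDuality p x (a • x)) +
        lpNorm p (a • x) ^ 2 := by
  rcases eq_or_ne x 0 with rfl | hx
  · simp [lpDuality_apply, lpNorm, hp]
  have hdual : lpNorm p x ^ (2 - p) * lpNorm p x ^ p = lpNorm p x ^ 2 := by
    rw [← Real.rpow_add (lpNorm_pos p hx), sub_add_cancel, Real.rpow_two]
  rw [show x + a • x = (1 + a) • x by module, lpNorm_smul hp, lpNorm_smul hp, map_smul,
    lpDuality_apply_self hp, smul_eq_mul, mul_pow, mul_pow, sq_abs, sq_abs]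
  linear_combination -2 * a * hdual

-- At `x = 0` and `p > 2` the factor `0 ^ (2 - p)` is a junk value; `lpDuality p 0 = 0` absorbs it.
theorem lpNorm_add_sq_le (hp : 2 ≤ p) (x y : ι → ℝ) :
    lpNorm p (x + y) ^ 2 ≤
      lpNorm p x ^ 2 + 2 * (lpNorm p x ^ (2 - p) * lpDuality p x y) + (p - 1) * lpNorm p y ^ 2 := by
  have hp0 : p ≠ 0 := by linarith
  by_cases hline : ∀ t : ℝ, x + t • y ≠ 0
  · exact lpNorm_add_sq_le_of_forall_ne_zero hp hline
  push Not at hline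
  obtain ⟨t, ht⟩ := hline
  have hy : lpNorm p y ^ 2 ≤ (p - 1) * lpNorm p y ^ 2 :=
    le_mul_of_one_le_left (sq_nonneg _) (by linarith)
  rcases eq_or_ne t 0 with rfl | ht0
  · obtain rfl : x = 0 := by simpa using ht
    simpa [lpDuality_apply, lpNorm, hp0] using hy
  · obtain rfl : y = (-t⁻¹) • x := by
      rw [eq_neg_of_add_eq_zero_left ht, smul_neg, neg_smul, neg_neg, inv_smul_smul₀ ht0]
    linarith [lpNorm_add_smul_self_sq hp0 x (-t⁻¹)]

theorem isTwoSmooth_lpSeminorm (ι : Type*) [Fintype ι] (hp : 2 ≤ p) :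
    IsTwoSmooth (lpSeminorm ι (one_le_two.trans hp)) (p - 1) := fun x =>
  ⟨(2 * lpNorm p x ^ (2 - p)) • lpDuality p x, fun y => by
    simpa [mul_assoc] using lpNorm_add_sq_le hp x y⟩

end LpNorm

section PathIndicator

variable {V : Type*} [DecidableEq V] {G : SimpleGraph V} {s t : V}

/-- The characteristic vector `𝟙_P` of the edges of a walk `P`, as a vector indexed by all
unordered pairs of vertices, in which the non-edges of the graph have coordinate `0`. -/
def edgeIndicator (P : G.Walk s t) : Sym2 V → ℝ :=
  fun e => if e ∈ P.edges then 1 else 0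

theorem lpNorm_edgeIndicator [Fintype V] {p : ℝ} (hp : p ≠ 0) {P : G.Walk s t} (hP : P.IsTrail) :
    lpNorm p (edgeIndicator P) = (P.length : ℝ) ^ (1 / p) := by
  have hterm : ∀ e, |edgeIndicator P e| ^ p = if e ∈ P.edges.toFinset then 1 else 0 := fun e => by
    by_cases he : e ∈ P.edges <;> simp [edgeIndicator, he, Real.zero_rpow hp]
  simp only [lpNorm, hterm, sum_boole, filter_mem_eq_inter, univ_inter]
  rw [List.toFinset_card_of_nodup hP.edges_nodup, P.length_edges]

theorem lpNorm_edgeIndicator_le [Fintype V] {p : ℝ} (hp : 0 < p) {P : G.Walk s t}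
    (hP : P.IsPath) : lpNorm p (edgeIndicator P) ≤ (Fintype.card V : ℝ) ^ (1 / p) := by
  rw [lpNorm_edgeIndicator hp.ne' hP.isTrail]
  gcongr
  exact hP.length_lt.le

end PathIndicator

/-- **Path stripping via approximate Carathéodory** (Proposition 5.2 of the paper):
any unit `s`-`t` flow `f*` (a point of the convex hull of indicator vectors of `s`-`t`
paths in a graph on `n` vertices) is within `ε` in ℓ_p norm of the average of at most
`⌈4(p-1)·n^{2/p}/ε²⌉` path indicator vectors. -/
theorem flow_path_rounding
    (V : Type) [Fintype V] [DecidableEq V]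
    (G : SimpleGraph V) (s t : V) (n : ℕ) (hn : n = Fintype.card V)
    (f : Sym2 V → ℝ)
    (hf : f ∈ convexHull ℝ {v : Sym2 V → ℝ |
      ∃ P : G.Walk s t, P.IsPath ∧ v = fun e => if e ∈ P.edges then (1 : ℝ) else 0})
    (p : ℝ) (hp : 2 ≤ p) (ε : ℝ) (hε : 0 < ε) :
    ∃ k : ℕ, 0 < k ∧ k ≤ ⌈4 * (p - 1) * (n : ℝ) ^ ((2 : ℝ) / p) / ε ^ 2⌉₊ ∧
      ∃ P : Fin k → G.Walk s t, (∀ i, (P i).IsPath) ∧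
        lpNorm p (fun e : Sym2 V =>
          (1 / (k : ℝ)) * (∑ i, if e ∈ (P i).edges then (1 : ℝ) else 0) - f e) ≤ ε := by
  have hp1 : 0 < p - 1 := by linarith
  have hn0 : (0 : ℝ) < n := by rw [hn]; exact_mod_cast Fintype.card_pos_iff.mpr ⟨s⟩
  have hk : 0 < ⌈4 * (p - 1) * (n : ℝ) ^ (2 / p) / ε ^ 2⌉₊ := Nat.ceil_pos.mpr (by positivity)
  have hR : ∀ v ∈ {v | ∃ P : G.Walk s t, P.IsPath ∧ v = edgeIndicator P},
      lpSeminorm (Sym2 V) (one_le_two.trans hp) v ≤ (n : ℝ) ^ (1 / p) := by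
    rintro _ ⟨P, hP, rfl⟩
    exact hn ▸ lpNorm_edgeIndicator_le (by linarith) hP
  have hRsq : ((n : ℝ) ^ (1 / p)) ^ 2 = (n : ℝ) ^ (2 / p) := by
    rw [← Real.rpow_mul_natCast hn0.le, Nat.cast_ofNat, one_div_mul_eq_div]
  obtain ⟨w, hwS, hw⟩ := (isTwoSmooth_lpSeminorm (Sym2 V) hp).approximate_caratheodory
    hp1.le hf hR hε hk (hRsq ▸ Nat.le_ceil _)
  choose P hP hPw using hwS
  refine ⟨_, hk, le_rfl, P, hP, ?_⟩
  convert hw using 1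
  refine congrArg (lpNorm p) (funext fun e => ?_)
  simp [hPw]
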